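/- Let G be a finite simple graph of order n with at least two vertices and no isolated vertex. Then χ_i(G) = n if and only if G is the complete graph K_n. -/

import Mathlib

/-!  Common definitions: irredundance, irredundance coloring,
irredundance compelling coloring, and related graph parameters. -/

variable {V : Type*}

/-- The closed neighborhood `N[v]` of a vertex `v`. -/
def closedNbr (G : SimpleGraph V) (v : V) : Set V := insert v (G.neighborSet v)

/-- The private neighbor set `pn[v,S] = N[v] − N[S − {v}]`. -/
def pnSet (G : SimpleGraph V) (S : Set V) (v : V) : Set V :=
  closedNbr G v \ ⋃ w ∈ S \ {v}, closedNbr G w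

/-- A set `S` is irredundant if every vertex of `S` has a private neighbor. -/
def IsIrredundant (G : SimpleGraph V) (S : Set V) : Prop :=
  ∀ v ∈ S, (pnSet G S v).Nonempty

/-- A maximal irredundant set: irredundant, and adding any outside vertex
destroys irredundance. -/
def IsMaxIrredundant (G : SimpleGraph V) (S : Set V) : Prop :=
  IsIrredundant G S ∧ ∀ w ∉ S, ¬ IsIrredundant G (insert w S)

/-- The lower irredundance number `ir(G)`: the minimum cardinality of a
maximal irredundant set. -/
noncomputable def lowerIr (G : SimpleGraph V) : ℕ :=
  sInf {n | ∃ S : Set V, IsMaxIrredundant G S ∧ S.ncard = n}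

/-- A proper coloring of `G` with colors in `Fin k`, viewed as a function. -/
def IsProperColoring (G : SimpleGraph V) {k : ℕ} (C : V → Fin k) : Prop :=
  ∀ u v, G.Adj u v → C u ≠ C v

/-- `G` has an irredundance coloring with `k` colors: a proper coloring
together with a maximal irredundant set whose vertices get distinct colors. -/
def IrredColorable (G : SimpleGraph V) (k : ℕ) : Prop :=
  ∃ C : V → Fin k, IsProperColoring G C ∧
    ∃ R : Set V, IsMaxIrredundant G R ∧ Set.InjOn C R

/-- The irredundance chromatic number `χᵢ(G)`. -/
noncomputable def irChrom (G : SimpleGraph V) : ℕ := sInf {k | IrredColorable G k}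

/-- `S` is a dominating set of `G`. -/
def IsDomSet (G : SimpleGraph V) (S : Set V) : Prop :=
  ∀ v, v ∈ S ∨ ∃ u ∈ S, G.Adj u v

/-- The domination number `γ(G)`. -/
noncomputable def domNum (G : SimpleGraph V) : ℕ :=
  sInf {n | ∃ S : Set V, IsDomSet G S ∧ S.ncard = n}

/-- `G` has a gamma coloring with `k` colors: a proper coloring together with
a dominating set whose vertices get distinct colors. -/
def GammaColorable (G : SimpleGraph V) (k : ℕ) : Prop :=
  ∃ C : V → Fin k, IsProperColoring G C ∧
    ∃ D : Set V, IsDomSet G D ∧ Set.InjOn C D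

/-- The gamma chromatic number `χ_γ(G)`. -/
noncomputable def gammaChrom (G : SimpleGraph V) : ℕ := sInf {k | GammaColorable G k}

/-- A rainbow committee of the coloring `C`: a set containing exactly one
vertex of each color class. -/
def IsRainbowCommittee {k : ℕ} (C : V → Fin k) (T : Set V) : Prop :=
  ∀ i : Fin k, ∃! v, v ∈ T ∧ C v = i

/-- `C` is an irredundance compelling coloring of `G` (with all `k` colors
used): a proper coloring, onto its `k` colors, such that every rainbow
committee is an irredundant set. -/
def IsIRCColoring (G : SimpleGraph V) {k : ℕ} (C : V → Fin k) : Prop :=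
  IsProperColoring G C ∧ Function.Surjective C ∧
    ∀ T : Set V, IsRainbowCommittee C T → IsIrredundant G T

/-- `G` admits an irredundance compelling coloring. -/
def IRCColorable (G : SimpleGraph V) : Prop :=
  ∃ (k : ℕ) (C : V → Fin k), IsIRCColoring G C

/-- The irredundance compelling chromatic number `χ_irc(G)`: the maximum
number of colors among all irredundance compelling colorings of `G`. -/
noncomputable def ircChrom (G : SimpleGraph V) : ℕ :=
  sSup {k | ∃ C : V → Fin k, IsIRCColoring G C}

/-- `G` has a dominator coloring with `k` colors: a proper coloring, onto its
`k` colors, in which every vertex dominates some color class. -/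
def DominatorColorable (G : SimpleGraph V) (k : ℕ) : Prop :=
  ∃ C : V → Fin k, IsProperColoring G C ∧ Function.Surjective C ∧
    ∀ v, ∃ i : Fin k, (∀ u, C u = i → G.Adj v u) ∨ {u | C u = i} = {v}

/-- The dominator chromatic number `χ_d(G)`. -/
noncomputable def domChrom (G : SimpleGraph V) : ℕ := sInf {k | DominatorColorable G k}

/-! A maximal independent set is a maximal irredundant set. If `b` has a neighbor `c`, extending
`{c}` to such a set `R` leaves `b` outside `R`, so `b` may take over the color of any non-neighbor
without creating a clash inside `R`. Hence `χᵢ(G) = n` forces every vertex to be isolated or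
universal, and as the two kinds cannot coexist, `G` is edgeless or complete. Conversely, `χᵢ` is
bounded below by both `χ` and `ir`, which equal `n` for the complete and the edgeless graph
respectively. -/

section MaximalIrredundant

variable {G : SimpleGraph V} {S : Set V}

lemma mem_closedNbr {v w : V} : w ∈ closedNbr G v ↔ w = v ∨ G.Adj v w :=
  Iff.rfl

lemma mem_pnSet {v x : V} :
    x ∈ pnSet G S v ↔ x ∈ closedNbr G v ∧ ∀ w ∈ S, w ≠ v → x ∉ closedNbr G w := by
  simp [pnSet]

lemma isIrredundant_of_isIndepSet (hS : G.IsIndepSet S) : IsIrredundant G S := by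
  refine fun v hv ↦ ⟨v, mem_pnSet.mpr ⟨mem_closedNbr.mpr (.inl rfl), fun w hw hwv hmem ↦ ?_⟩⟩
  exact (mem_closedNbr.mp hmem).elim hwv.symm (hS hw hv hwv)

lemma IsDomSet.exists_mem_closedNbr (hS : IsDomSet G S) (v : V) : ∃ u ∈ S, v ∈ closedNbr G u :=
  (hS v).elim (fun hv ↦ ⟨v, hv, .inl rfl⟩) fun ⟨u, hu, huv⟩ ↦ ⟨u, hu, .inr huv⟩

lemma IsDomSet.not_isIrredundant_insert (hS : IsDomSet G S) {w : V} (hw : w ∉ S) :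
    ¬ IsIrredundant G (insert w S) := by
  intro hirr
  obtain ⟨x, hx⟩ := hirr w (Set.mem_insert w S)
  obtain ⟨u, hu, hxu⟩ := hS.exists_mem_closedNbr x
  exact (mem_pnSet.mp hx).2 u (Set.mem_insert_of_mem w hu) (ne_of_mem_of_not_mem hu hw) hxu

lemma isDomSet_of_maximal_isIndepSet (hS : Maximal G.IsIndepSet S) : IsDomSet G S := by
  intro v
  by_contra! ⟨hv, hadj⟩
  have hinsert : G.IsIndepSet (insert v S) :=
    hS.prop.insert fun u hu _ ↦ ⟨fun h ↦ hadj u hu h.symm, hadj u hu⟩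
  exact hv (hS.le_of_ge hinsert (Set.subset_insert v S) (Set.mem_insert v S))

lemma isMaxIrredundant_of_maximal_isIndepSet (hS : Maximal G.IsIndepSet S) :
    IsMaxIrredundant G S :=
  ⟨isIrredundant_of_isIndepSet hS.prop,
    fun _ hw ↦ (isDomSet_of_maximal_isIndepSet hS).not_isIrredundant_insert hw⟩

lemma exists_maximal_isIndepSet_superset (hS : G.IsIndepSet S) :
    ∃ M, S ⊆ M ∧ Maximal G.IsIndepSet M :=
  zorn_subset_nonempty {M | G.IsIndepSet M}
    (fun c hc hchain _ ↦ ⟨⋃₀ c, (Set.pairwise_sUnion hchain.directedOn).mpr hc,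
      fun _ ↦ Set.subset_sUnion_of_mem⟩) S hS

variable (G) in
lemma exists_isMaxIrredundant : ∃ R, IsMaxIrredundant G R := by
  obtain ⟨M, -, hM⟩ := exists_maximal_isIndepSet_superset (G := G) (Set.pairwise_empty _)
  exact ⟨M, isMaxIrredundant_of_maximal_isIndepSet hM⟩

lemma exists_isMaxIrredundant_notMem_of_adj {b c : V} (hbc : G.Adj b c) :
    ∃ R, IsMaxIrredundant G R ∧ b ∉ R := by
  obtain ⟨M, hcM, hM⟩ := exists_maximal_isIndepSet_superset (G := G) (Set.pairwise_singleton c _)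
  exact ⟨M, isMaxIrredundant_of_maximal_isIndepSet hM,
    fun hb ↦ hM.prop hb (hcM rfl) hbc.ne hbc⟩

lemma isMaxIrredundant_bot_iff : IsMaxIrredundant (⊥ : SimpleGraph V) S ↔ S = Set.univ := by
  have hirr (T : Set V) : IsIrredundant ⊥ T := isIrredundant_of_isIndepSet fun _ _ _ _ _ ↦ id
  refine ⟨fun hS ↦ Set.eq_univ_of_forall fun v ↦ by_contra fun hv ↦ hS.2 v hv (hirr _), ?_⟩
  rintro rfl
  exact ⟨hirr _, fun w hw ↦ absurd (Set.mem_univ w) hw⟩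

lemma lowerIr_bot : lowerIr (⊥ : SimpleGraph V) = Nat.card V := by
  simp [lowerIr, isMaxIrredundant_bot_iff, Set.ncard_univ]

end MaximalIrredundant

section IrredundanceChromaticNumber

variable {G : SimpleGraph V}

lemma irredColorable_card_of_coloring {α : Type*} [Fintype α] (C : G.Coloring α) {R : Set V}
    (hR : IsMaxIrredundant G R) (hC : Set.InjOn C R) : IrredColorable G (Fintype.card α) :=
  have e := Fintype.equivFin α
  ⟨e ∘ C, fun _ _ h ↦ e.injective.ne (C.valid h), R, hR, e.injective.comp_injOn hC⟩

lemma IrredColorable.colorable {k : ℕ} (h : IrredColorable G k) : G.Colorable k :=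
  have ⟨C, hC, _⟩ := h
  ⟨.mk C (hC _ _)⟩

lemma IrredColorable.lowerIr_le {k : ℕ} (h : IrredColorable G k) : lowerIr G ≤ k := by
  obtain ⟨C, -, R, hR, hinj⟩ := h
  calc lowerIr G ≤ R.ncard := Nat.sInf_le ⟨R, hR, rfl⟩
    _ = (C '' R).ncard := hinj.ncard_image.symm
    _ ≤ k := by simpa using Set.ncard_le_card (C '' R)

variable (G) in
lemma irredColorable_card [Fintype V] : IrredColorable G (Fintype.card V) :=
  have ⟨_, hR⟩ := exists_isMaxIrredundant G
  irredColorable_card_of_coloring G.selfColoring hR Function.injective_id.injOn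

variable (G) in
lemma irredColorable_irChrom [Finite V] : IrredColorable G (irChrom G) := by
  cases nonempty_fintype V
  exact Nat.sInf_mem (s := {k | IrredColorable G k}) ⟨_, irredColorable_card G⟩

variable [Fintype V]

variable (G) in
lemma irChrom_le_card : irChrom G ≤ Fintype.card V :=
  Nat.sInf_le (irredColorable_card G)

lemma irChrom_top : irChrom (⊤ : SimpleGraph V) = Fintype.card V := by
  refine (irChrom_le_card ⊤).antisymm ?_
  have hle := (irredColorable_irChrom (⊤ : SimpleGraph V)).colorable.chromaticNumber_le
  rw [SimpleGraph.chromaticNumber_top] at hle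
  exact_mod_cast hle

lemma irChrom_bot : irChrom (⊥ : SimpleGraph V) = Fintype.card V := by
  refine (irChrom_le_card ⊥).antisymm ?_
  rw [← Nat.card_eq_fintype_card, ← lowerIr_bot]
  exact (irredColorable_irChrom ⊥).lowerIr_le

lemma irChrom_lt_card_of_not_adj {a b : V} (hab : a ≠ b) (hadj : ¬ G.Adj a b) {R : Set V}
    (hR : IsMaxIrredundant G R) (hb : b ∉ R) : irChrom G < Fintype.card V := by
  classical
  let C : G.Coloring {v // v ≠ b} :=
    .mk (fun v ↦ if hv : v = b then ⟨a, hab⟩ else ⟨v, hv⟩) (by grind [G.adj_comm, G.irrefl])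
  have hval {v : V} (hv : v ∈ R) : (C v : V) = v := by
    have hvb : v ≠ b := ne_of_mem_of_not_mem hv hb
    exact congrArg Subtype.val (dif_neg hvb)
  have hinj : Set.InjOn C R := fun u hu v hv huv ↦ by rw [← hval hu, huv, hval hv]
  calc irChrom G ≤ Fintype.card {v // v ≠ b} :=
        Nat.sInf_le (irredColorable_card_of_coloring C hR hinj)
    _ < Fintype.card V := Fintype.card_subtype_lt (x := b) (by simp)

lemma isUniversal_of_irChrom_eq_card (h : irChrom G = Fintype.card V) {b c : V}
    (hbc : G.Adj b c) : G.IsUniversal b := by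
  intro a hba
  obtain ⟨R, hR, hb⟩ := exists_isMaxIrredundant_notMem_of_adj hbc
  by_contra hadj
  exact (irChrom_lt_card_of_not_adj hba.symm (fun hab ↦ hadj hab.symm) hR hb).ne h

theorem irChrom_eq_card_iff_complete_general (G : SimpleGraph V) :
    irChrom G = Fintype.card V ↔ G = ⊤ ∨ G = ⊥ := by
  refine ⟨fun h ↦ or_iff_not_imp_right.mpr fun hbot ↦ ?_, ?_⟩
  · obtain ⟨b, c, hbc⟩ := SimpleGraph.ne_bot_iff_exists_adj.mp hbot
    have : Nontrivial V := ⟨b, c, hbc.ne⟩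
    have hb : G.IsUniversal b := isUniversal_of_irChrom_eq_card h hbc
    refine SimpleGraph.eq_top_iff_forall_isUniversal.mpr fun v ↦ ?_
    obtain ⟨w, hvw⟩ : ∃ w, G.Adj v w := by
      simpa [SimpleGraph.IsIsolated] using hb.not_isIsolated v
    exact isUniversal_of_irChrom_eq_card h hvw
  · rintro (rfl | rfl)
    exacts [irChrom_top, irChrom_bot]

end IrredundanceChromaticNumber

/-- for a graph of order `n ≥ 2` without isolated vertices,
`χᵢ(G) = n` iff `G` is complete. -/
theorem irChrom_eq_card_iff_complete {V : Type*} [Fintype V] (G : SimpleGraph V)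
    (hcard : 2 ≤ Fintype.card V) (hiso : ∀ v : V, ∃ u, G.Adj v u) :
    irChrom G = Fintype.card V ↔ G = ⊤ := by
  have : Nonempty V := Fintype.card_pos_iff.mp (by lia)
  have hbot : G ≠ ⊥ := SimpleGraph.ne_bot_iff_exists_adj.mpr ⟨Classical.arbitrary V, hiso _⟩
  simp [irChrom_eq_card_iff_complete_general, hbot]
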